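/- arXiv:2410.08004 — 2 statements merged into one kernel-verified Lean document; each statement's English description precedes it below -/
import Mathlib

section
/- Under assumptions (A) and (B), there exist a constant C₁ > 0 and N₀ ∈ ℕ such that for all N ≥ N₀ and all m ∈ Δ with Nm ∈ ℤ^q, the Gibbs probability of the magnetization value m satisfies μ_N(m_N = m) ≤ C₁ exp(N (G(m̂) − sup_{m̂' ∈ Δ̂} G(m̂'))). -/
open Filter Real MeasureTheory

/-!
Both bounds come from comparing the counting measure on configurations with an i.i.d. measure, so no
Stirling estimate is needed.

*Numerator.* Under `m^{⊗N}` each configuration of magnetization `m` has probability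
`exp (-N ent m)`, so there are at most `exp (N ent m)` of them.

*Denominator.* Let `w` maximize `F + ent` over the simplex. Jensen's inequality under `w^{⊗N}` gives
`Z_N ≥ exp (N (𝔼 [F (m_N)] + ent w))`. Since `𝔼 [m_N] = w`, the first-order term of the Taylor
expansion of `F` at `w` has mean zero, and the quadratic remainder contributes `O(1 / N)` because
the coordinates of `m_N` have total variance at most `1 / N`. Hence
`Z_N ≥ exp (N sup (F + ent) - K)` for some constant `K`. Only `F` is expanded, never `ent`,
which is singular at the boundary of the simplex.
-/

open scoped Topology

section Taylor

open Asymptotics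

variable {E F : Type*} [NormedAddCommGroup E] [NormedAddCommGroup F]

lemma isBigO_principal_of_isBigO_nhdsWithin {X : Type*} [TopologicalSpace X] {s : Set X} {x : X}
    {g : X → E} {h : X → F} (hs : IsCompact s) (hg : ContinuousOn g s) (hh : ContinuousOn h s)
    (hne : ∀ y ∈ s, y ≠ x → h y ≠ 0) (hgh : g =O[𝓝[s] x] h) : g =O[𝓟 s] h := by
  obtain ⟨C, hC⟩ := hgh.bound
  obtain ⟨U, hU, hxU, hUC⟩ := mem_nhdsWithin.1 hC
  have near : g =O[𝓟 (U ∩ s)] h := .of_bound C (mem_principal.2 hUC)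
  have hne' : ∀ y ∈ s \ U, h y ≠ 0 := fun y hy =>
    hne y hy.1 (by rintro rfl; exact hy.2 hxU)
  have far : g =O[𝓟 (s \ U)] h :=
    ((hg.mono Set.sdiff_subset).isBigO_principal (hs.diff hU) (c := (1 : ℝ)) (by simp)).trans
      ((hh.mono Set.sdiff_subset).isBigO_rev_principal (hs.diff hU) hne' 1)
  refine (near.sup far).mono ?_
  rw [sup_principal, Set.inter_comm, Set.inter_union_sdiff]

variable [NormedSpace ℝ E] [NormedSpace ℝ F] {f : E → F} {s : Set E} {x : E}

lemma exists_taylor_two_isBigO_nhdsWithin (hs : Convex ℝ s) (hx : x ∈ s)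
    (hf : ContDiffWithinAt ℝ 2 f s x) :
    ∃ L : E →L[ℝ] F, (fun y => f y - f x - L (y - x)) =O[𝓝[s] x] fun y => ‖y - x‖ ^ 2 := by
  obtain ⟨u, hu, -, -, f', hf', hf'diff⟩ :=
    (contDiffWithinAt_succ_iff_hasFDerivWithinAt' (n := 1) (by simp)).1 hf
  rw [Set.insert_eq_of_mem hx] at hu
  obtain ⟨K, hK, hbound⟩ := (hf'diff.differentiableWithinAt one_ne_zero).isBigO_sub.exists_pos
  obtain ⟨r, hr, hball⟩ := Metric.mem_nhdsWithin_iff.1 (inter_mem hu hbound.bound)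
  refine ⟨f' x, .of_bound K ?_⟩
  filter_upwards [inter_mem_nhdsWithin s (Metric.ball_mem_nhds x hr)] with y ⟨hys, hyr⟩
  set t := s ∩ Metric.closedBall x ‖y - x‖
  have ht : t ⊆ u ∩ {z | ‖f' z - f' x‖ ≤ K * ‖z - x‖} := fun z hz =>
    hball ⟨(Metric.mem_closedBall.1 hz.2).trans_lt (by rwa [← dist_eq_norm]), hz.1⟩
  have hderiv : ∀ z ∈ t, ‖f' z - f' x‖ ≤ K * ‖y - x‖ := fun z hz =>
    (ht hz).2.trans (by gcongr; exact mem_closedBall_iff_norm.1 hz.2)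
  calc ‖f y - f x - f' x (y - x)‖ ≤ K * ‖y - x‖ * ‖y - x‖ :=
        (hs.inter (convex_closedBall x _)).norm_image_sub_le_of_norm_hasFDerivWithin_le'
          (fun z hz => (hf' z (ht hz).1).mono Set.inter_subset_left) hderiv
          ⟨hx, Metric.mem_closedBall_self (norm_nonneg _)⟩ ⟨hys, mem_closedBall_iff_norm.2 le_rfl⟩
    _ = K * ‖‖y - x‖ ^ 2‖ := by rw [norm_pow, norm_norm]; ring

lemma exists_taylor_two_isBigO_principal (hs : Convex ℝ s) (hsc : IsCompact s) (hx : x ∈ s)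
    (hf : ContDiffOn ℝ 2 f s) :
    ∃ L : E →L[ℝ] F, (fun y => f y - f x - L (y - x)) =O[𝓟 s] fun y => ‖y - x‖ ^ 2 := by
  obtain ⟨L, hL⟩ := exists_taylor_two_isBigO_nhdsWithin hs hx (hf x hx)
  have hfc : ContinuousOn f s := hf.continuousOn
  refine ⟨L, isBigO_principal_of_isBigO_nhdsWithin hsc (by fun_prop) (by fun_prop) ?_ hL⟩
  exact fun y _ hyx => pow_ne_zero 2 (norm_ne_zero_iff.2 (sub_ne_zero.2 hyx))

end Taylor

lemma sq_norm_le_sum_sq {κ : Type*} [Fintype κ] (x : κ → ℝ) : ‖x‖ ^ 2 ≤ ∑ k, x k ^ 2 :=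
  (le_sqrt (norm_nonneg x) (by positivity)).1 <|
    (pi_norm_le_iff_of_nonneg (sqrt_nonneg _)).2 fun k =>
      abs_le_sqrt (Finset.single_le_sum (fun l _ => sq_nonneg (x l)) (Finset.mem_univ k))

section IidWeight

variable {ι κ : Type*} [Fintype ι]

/-- The probability of the configuration `σ` when the spins are independent with law `w`. -/
def iidWeight (w : κ → ℝ) (σ : ι → κ) : ℝ := ∏ i, w (σ i)

lemma iidWeight_nonneg {w : κ → ℝ} (hw : ∀ k, 0 ≤ w k) (σ : ι → κ) : 0 ≤ iidWeight w σ :=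
  Finset.prod_nonneg fun _ _ => hw _

variable [DecidableEq ι] [Fintype κ] {w : κ → ℝ}

lemma sum_iidWeight_mul_prod (hw : ∑ k, w k = 1) (s : Finset ι) (f : ι → κ → ℝ) :
    ∑ σ, iidWeight w σ * ∏ i ∈ s, f i (σ i) = ∏ i ∈ s, ∑ k, w k * f i k := by
  calc ∑ σ, iidWeight w σ * ∏ i ∈ s, f i (σ i)
      = ∑ σ : ι → κ, ∏ i, w (σ i) * if i ∈ s then f i (σ i) else 1 := by
        simp only [iidWeight, Finset.prod_mul_distrib, Fintype.prod_ite_mem]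
    _ = ∏ i, ∑ k, w k * if i ∈ s then f i k else 1 := by
        rw [← Finset.sum_prod_piFinset, Fintype.piFinset_univ]
    _ = ∏ i ∈ s, ∑ k, w k * f i k := by
        rw [← Fintype.prod_ite_mem s]
        refine Fintype.prod_congr _ _ fun i => ?_
        split_ifs <;> simp [hw]

lemma sum_iidWeight (hw : ∑ k, w k = 1) : ∑ σ : ι → κ, iidWeight w σ = 1 := by
  simpa using sum_iidWeight_mul_prod hw (∅ : Finset ι) 0

lemma sum_iidWeight_mul_eval (hw : ∑ k, w k = 1) (i : ι) (f : κ → ℝ) :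
    ∑ σ, iidWeight w σ * f (σ i) = ∑ k, w k * f k := by
  simpa using sum_iidWeight_mul_prod hw {i} fun _ => f

lemma sum_iidWeight_mul_eval_mul_eval (hw : ∑ k, w k = 1) {i j : ι} (hij : i ≠ j) (f : κ → ℝ) :
    ∑ σ, iidWeight w σ * (f (σ i) * f (σ j)) = (∑ k, w k * f k) ^ 2 := by
  simpa [Finset.prod_pair hij, sq] using sum_iidWeight_mul_prod hw {i, j} fun _ => f

lemma sum_iidWeight_mul_sum (hw : ∑ k, w k = 1) (f : κ → ℝ) :
    ∑ σ : ι → κ, iidWeight w σ * ∑ i, f (σ i) = Fintype.card ι * ∑ k, w k * f k := by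
  simp only [Finset.mul_sum _ _ (iidWeight w _)]
  rw [Finset.sum_comm]
  simp [sum_iidWeight_mul_eval hw]

lemma sum_iidWeight_mul_sq_sum (hw : ∑ k, w k = 1) {f : κ → ℝ} (hf : ∑ k, w k * f k = 0) :
    ∑ σ : ι → κ, iidWeight w σ * (∑ i, f (σ i)) ^ 2 = Fintype.card ι * ∑ k, w k * f k ^ 2 := by
  have covariance (i j : ι) : ∑ σ, iidWeight w σ * (f (σ i) * f (σ j))
      = if i = j then ∑ k, w k * f k ^ 2 else 0 := by
    split_ifs with hij
    · subst hij
      simpa only [← sq] using sum_iidWeight_mul_eval hw i fun k => f k ^ 2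
    · rw [sum_iidWeight_mul_eval_mul_eval hw hij, hf, zero_pow two_ne_zero]
  calc ∑ σ : ι → κ, iidWeight w σ * (∑ i, f (σ i)) ^ 2
      = ∑ σ : ι → κ, ∑ i, ∑ j, iidWeight w σ * (f (σ i) * f (σ j)) := by
        simp only [sq, Fintype.sum_mul_sum]
        simp only [Finset.mul_sum]
    _ = ∑ i, ∑ j, ∑ σ, iidWeight w σ * (f (σ i) * f (σ j)) := by
        rw [Finset.sum_comm]
        exact Finset.sum_congr rfl fun _ _ => Finset.sum_comm
    _ = Fintype.card ι * ∑ k, w k * f k ^ 2 := by simp [covariance]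

/-- The Shannon entropy, in nats; `0 log 0 = 0`. -/
noncomputable def shannonEntropy (m : κ → ℝ) : ℝ := ∑ k, negMulLog (m k)

lemma continuous_shannonEntropy : Continuous (shannonEntropy : (κ → ℝ) → ℝ) :=
  continuous_finsetSum _ fun k _ => continuous_negMulLog.comp (continuous_apply k)

/-- The lower half of the Gibbs variational principle, for i.i.d. trial measures. -/
lemma exp_sum_iidWeight_mul_add_shannonEntropy_le (hw : w ∈ stdSimplex ℝ κ) (X : (ι → κ) → ℝ) :
    exp (∑ σ, iidWeight w σ * X σ + Fintype.card ι * shannonEntropy w) ≤ ∑ σ, exp (X σ) := by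
  have hentropy : ∑ σ : ι → κ, iidWeight w σ * ∑ i, log (w (σ i))
      = -(Fintype.card ι * shannonEntropy w) := by
    simp [sum_iidWeight_mul_sum hw.2 fun k => log (w k), shannonEntropy, negMulLog]
  have hdensity (σ : ι → κ) :
      iidWeight w σ * exp (X σ - ∑ i, log (w (σ i))) ≤ exp (X σ) := by
    rcases (iidWeight_nonneg hw.1 σ).eq_or_lt with h0 | hpos
    · rw [← h0, zero_mul]
      positivity
    · have hne : ∀ i ∈ Finset.univ, w (σ i) ≠ 0 := Finset.prod_ne_zero_iff.1 hpos.ne'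
      rw [← log_prod hne, exp_sub]
      change iidWeight w σ * (exp (X σ) / exp (log (iidWeight w σ))) ≤ exp (X σ)
      rw [exp_log hpos, mul_div_cancel₀ _ hpos.ne']
  calc exp (∑ σ, iidWeight w σ * X σ + Fintype.card ι * shannonEntropy w)
      = exp (∑ σ, iidWeight w σ * (X σ - ∑ i, log (w (σ i)))) := by
        simp only [mul_sub, Finset.sum_sub_distrib, hentropy, sub_neg_eq_add]
    _ ≤ ∑ σ, iidWeight w σ * exp (X σ - ∑ i, log (w (σ i))) :=
        convexOn_exp.map_sum_le (fun σ _ => iidWeight_nonneg hw.1 σ) (sum_iidWeight hw.2)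
          fun _ _ => Set.mem_univ _
    _ ≤ ∑ σ, exp (X σ) := Finset.sum_le_sum fun σ _ => hdensity σ

end IidWeight

section Magnetization

variable {ι κ : Type*} [Fintype ι] [DecidableEq κ]

/-- The empirical distribution `m_N(σ)` of the spins of `σ`; it is `0` when there are no sites. -/
noncomputable def magnetization (σ : ι → κ) : κ → ℝ :=
  fun k => (Finset.card {i | σ i = k} : ℝ) / Fintype.card ι

lemma magnetization_apply_pos (σ : ι → κ) (i : ι) : 0 < magnetization σ (σ i) := by
  have hfiber : 0 < Finset.card {j | σ j = σ i} := Finset.card_pos.2 ⟨i, by simp⟩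
  have : Nonempty ι := ⟨i⟩
  unfold magnetization
  positivity

variable [Fintype κ]

lemma card_mul_sum_magnetization_mul (σ : ι → κ) (g : κ → ℝ) :
    Fintype.card ι * ∑ k, magnetization σ k * g k = ∑ i, g (σ i) := by
  rcases isEmpty_or_nonempty ι with _ | _
  · simp
  · rw [← Finset.sum_fiberwise' Finset.univ σ g, Finset.mul_sum]
    refine Finset.sum_congr rfl fun k _ => ?_
    rw [Finset.sum_const, nsmul_eq_mul, magnetization]
    field_simp

lemma magnetization_mem_stdSimplex [Nonempty ι] (σ : ι → κ) :
    magnetization σ ∈ stdSimplex ℝ κ := by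
  refine ⟨fun k => by unfold magnetization; positivity, ?_⟩
  have h := card_mul_sum_magnetization_mul σ 1
  simpa using h

lemma iidWeight_magnetization (σ : ι → κ) :
    iidWeight (magnetization σ) σ
      = exp (-(Fintype.card ι * shannonEntropy (magnetization σ))) := by
  calc iidWeight (magnetization σ) σ = exp (∑ i, log (magnetization σ (σ i))) := by
        rw [exp_sum]
        exact Finset.prod_congr rfl fun i _ => (exp_log (magnetization_apply_pos σ i)).symm
    _ = exp (-(Fintype.card ι * shannonEntropy (magnetization σ))) := by
        rw [← card_mul_sum_magnetization_mul σ fun k => log (magnetization σ k)]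
        simp [shannonEntropy, negMulLog]

variable [DecidableEq ι] {w m : κ → ℝ}

lemma card_magnetization_eq_le (hm : m ∈ stdSimplex ℝ κ) :
    (Finset.card {σ : ι → κ | magnetization σ = m} : ℝ)
      ≤ exp (Fintype.card ι * shannonEntropy m) := by
  have hmass := calc
    Finset.card {σ : ι → κ | magnetization σ = m} * exp (-(Fintype.card ι * shannonEntropy m))
      = ∑ σ : ι → κ with magnetization σ = m, iidWeight m σ := by
        rw [← nsmul_eq_mul, ← Finset.sum_const]
        refine Finset.sum_congr rfl fun σ hσ => ?_
        rw [← (Finset.mem_filter.1 hσ).2, iidWeight_magnetization]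
    _ ≤ ∑ σ, iidWeight m σ := Finset.sum_le_sum_of_subset_of_nonneg (Finset.filter_subset _ _)
        fun σ _ _ => iidWeight_nonneg hm.1 σ
    _ = 1 := sum_iidWeight hm.2
  rwa [exp_neg, ← div_eq_mul_inv, div_le_one (exp_pos _)] at hmass

variable [Nonempty ι]

lemma sum_iidWeight_smul_magnetization (hw : ∑ k, w k = 1) :
    ∑ σ : ι → κ, iidWeight w σ • magnetization σ = w := by
  ext k
  have hcoord (σ : ι → κ) : ∑ i, (if σ i = k then 1 else 0)
      = (Fintype.card ι : ℝ) * magnetization σ k := by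
    simpa using (card_mul_sum_magnetization_mul σ fun l => if l = k then 1 else 0).symm
  have hmean := sum_iidWeight_mul_sum (ι := ι) hw fun l => if l = k then 1 else 0
  simp only [hcoord, mul_left_comm _ (Fintype.card ι : ℝ), ← Finset.mul_sum] at hmean
  simpa using hmean

lemma sum_iidWeight_mul_sq_magnetization_sub (hw : ∑ k, w k = 1) (k : κ) :
    ∑ σ : ι → κ, iidWeight w σ * (magnetization σ k - w k) ^ 2
      = w k * (1 - w k) / Fintype.card ι := by
  set f : κ → ℝ := fun l => (if l = k then 1 else 0) - w k with hf
  have hmean : ∑ l, w l * f l = 0 := by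
    simp [hf, mul_sub, Finset.sum_sub_distrib, ← Finset.sum_mul, hw]
  have hvar : ∑ l, w l * f l ^ 2 = w k * (1 - w k) := by
    have hterm (l : κ) : w l * f l ^ 2
        = (if l = k then w l * (1 - 2 * w k) else 0) + w l * w k ^ 2 := by
      simp only [hf]
      split_ifs <;> ring
    simp only [hterm, Finset.sum_add_distrib, ← Finset.sum_mul, hw, Finset.sum_ite_eq',
      Finset.mem_univ, if_true]
    ring
  have hcoord (σ : ι → κ) : ∑ i, f (σ i) = Fintype.card ι * (magnetization σ k - w k) := by
    rw [← card_mul_sum_magnetization_mul]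
    simp [hf, mul_sub, Finset.sum_sub_distrib, ← Finset.sum_mul,
      (magnetization_mem_stdSimplex σ).2]
  have hmoment := sum_iidWeight_mul_sq_sum (ι := ι) hw hmean
  simp only [hcoord, hvar, mul_pow, mul_left_comm _ ((Fintype.card ι : ℝ) ^ 2),
    ← Finset.mul_sum] at hmoment
  rw [eq_div_iff (by positivity)]
  refine mul_left_cancel₀ (b := _) (a := (Fintype.card ι : ℝ)) (by positivity) ?_
  linarith

lemma sum_iidWeight_mul_sq_norm_magnetization_sub_le (hw : w ∈ stdSimplex ℝ κ) :
    ∑ σ : ι → κ, iidWeight w σ * ‖magnetization σ - w‖ ^ 2 ≤ 1 / Fintype.card ι := by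
  calc ∑ σ : ι → κ, iidWeight w σ * ‖magnetization σ - w‖ ^ 2
      ≤ ∑ σ : ι → κ, iidWeight w σ * ∑ k, (magnetization σ k - w k) ^ 2 :=
        Finset.sum_le_sum fun σ _ =>
          mul_le_mul_of_nonneg_left (sq_norm_le_sum_sq _) (iidWeight_nonneg hw.1 σ)
    _ = ∑ k, w k * (1 - w k) / Fintype.card ι := by
        simp only [Finset.mul_sum]
        rw [Finset.sum_comm]
        simp only [sum_iidWeight_mul_sq_magnetization_sub hw.2]
    _ ≤ ∑ k, w k / Fintype.card ι := by
        gcongr with k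
        nlinarith [sq_nonneg (w k)]
    _ = 1 / Fintype.card ι := by rw [← Finset.sum_div, hw.2]

end Magnetization

section Gibbs

variable {κ : Type*} [Fintype κ] [DecidableEq κ] {F : (κ → ℝ) → ℝ} {m w : κ → ℝ}

/-- The partition function `Z` of the mean-field model with energy `F` on the set of sites `ι`. -/
noncomputable def partitionFunction (ι : Type*) [Fintype ι] [DecidableEq ι]
    (F : (κ → ℝ) → ℝ) : ℝ :=
  ∑ σ : ι → κ, exp (Fintype.card ι * F (magnetization σ))

/-- The probability `μ (m_N = m)` of the magnetization value `m` under the Gibbs measure. -/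
noncomputable def gibbsProb (ι : Type*) [Fintype ι] [DecidableEq ι]
    (F : (κ → ℝ) → ℝ) (m : κ → ℝ) : ℝ :=
  ∑ σ : ι → κ, if magnetization σ = m then
    exp (Fintype.card ι * F (magnetization σ)) / partitionFunction ι F else 0

/-- The functional `F + ent` (the paper's `G`, in the coordinates of the simplex) whose maximizers
carry the Gibbs measure. -/
noncomputable def energyEntropy (F : (κ → ℝ) → ℝ) (m : κ → ℝ) : ℝ := F m + shannonEntropy m

variable {ι : Type*} [Fintype ι] [DecidableEq ι]

lemma sub_div_card_le_sum_iidWeight_mul_magnetization [Nonempty ι] (hw : w ∈ stdSimplex ℝ κ)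
    {L : (κ → ℝ) →L[ℝ] ℝ} {K : ℝ} (hK : 0 ≤ K)
    (hF : ∀ m ∈ stdSimplex ℝ κ, F w + L (m - w) - K * ‖m - w‖ ^ 2 ≤ F m) :
    F w - K / Fintype.card ι ≤ ∑ σ : ι → κ, iidWeight w σ * F (magnetization σ) := by
  have hlinear : ∑ σ : ι → κ, iidWeight w σ * L (magnetization σ - w) = 0 := by
    calc ∑ σ : ι → κ, iidWeight w σ * L (magnetization σ - w)
        = L (∑ σ : ι → κ, iidWeight w σ • (magnetization σ - w)) := by
          simp only [map_sum, map_smul, smul_eq_mul]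
      _ = 0 := by
        simp only [smul_sub, Finset.sum_sub_distrib, sum_iidWeight_smul_magnetization hw.2,
          ← Finset.sum_smul, sum_iidWeight hw.2, one_smul, sub_self, map_zero]
  calc F w - K / Fintype.card ι
      ≤ F w - K * ∑ σ : ι → κ, iidWeight w σ * ‖magnetization σ - w‖ ^ 2 := by
        rw [div_eq_mul_one_div]
        gcongr
        exact sum_iidWeight_mul_sq_norm_magnetization_sub_le hw
    _ = ∑ σ : ι → κ, iidWeight w σ *
          (F w + L (magnetization σ - w) - K * ‖magnetization σ - w‖ ^ 2) := by
        simp only [mul_sub, mul_add, Finset.sum_sub_distrib, Finset.sum_add_distrib, hlinear,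
          ← Finset.sum_mul, sum_iidWeight hw.2, Finset.mul_sum, mul_left_comm K, one_mul,
          add_zero]
    _ ≤ ∑ σ : ι → κ, iidWeight w σ * F (magnetization σ) :=
        Finset.sum_le_sum fun σ _ => mul_le_mul_of_nonneg_left
          (hF _ (magnetization_mem_stdSimplex σ)) (iidWeight_nonneg hw.1 σ)

lemma exp_energyEntropy_sub_le_partitionFunction [Nonempty ι] (hw : w ∈ stdSimplex ℝ κ)
    {L : (κ → ℝ) →L[ℝ] ℝ} {K : ℝ} (hK : 0 ≤ K)
    (hF : ∀ m ∈ stdSimplex ℝ κ, F w + L (m - w) - K * ‖m - w‖ ^ 2 ≤ F m) :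
    exp (Fintype.card ι * energyEntropy F w - K) ≤ partitionFunction ι F := by
  refine le_trans (exp_le_exp.2 ?_) (exp_sum_iidWeight_mul_add_shannonEntropy_le hw _)
  calc Fintype.card ι * energyEntropy F w - K
      = Fintype.card ι * (F w - K / Fintype.card ι) + Fintype.card ι * shannonEntropy w := by
        rw [energyEntropy]
        field_simp
        ring
    _ ≤ Fintype.card ι * (∑ σ : ι → κ, iidWeight w σ * F (magnetization σ))
          + Fintype.card ι * shannonEntropy w := by
        gcongr
        exact sub_div_card_le_sum_iidWeight_mul_magnetization hw hK hF
    _ = ∑ σ : ι → κ, iidWeight w σ * (Fintype.card ι * F (magnetization σ))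
          + Fintype.card ι * shannonEntropy w := by
        simp only [Finset.mul_sum, mul_left_comm]

lemma gibbsProb_le_exp_div_partitionFunction (hm : m ∈ stdSimplex ℝ κ) :
    gibbsProb ι F m ≤ exp (Fintype.card ι * energyEntropy F m) / partitionFunction ι F := by
  have hZ : 0 ≤ partitionFunction ι F := Finset.sum_nonneg fun _ _ => (exp_pos _).le
  calc gibbsProb ι F m
      = Finset.card {σ : ι → κ | magnetization σ = m} *
          (exp (Fintype.card ι * F m) / partitionFunction ι F) := by
        rw [gibbsProb, ← Finset.sum_filter, ← nsmul_eq_mul, ← Finset.sum_const]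
        exact Finset.sum_congr rfl fun σ hσ => by rw [(Finset.mem_filter.1 hσ).2]
    _ ≤ exp (Fintype.card ι * shannonEntropy m) *
          (exp (Fintype.card ι * F m) / partitionFunction ι F) := by
        gcongr
        exact card_magnetization_eq_le hm
    _ = exp (Fintype.card ι * energyEntropy F m) / partitionFunction ι F := by
        rw [energyEntropy, ← mul_div_assoc, ← exp_add]
        ring_nf

theorem exists_gibbsProb_le [Nonempty κ] (hF : ContDiffOn ℝ 2 F (stdSimplex ℝ κ)) :
    ∃ C > 0, ∀ (ι : Type*) [Fintype ι] [DecidableEq ι] [Nonempty ι],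
      ∀ m ∈ stdSimplex ℝ κ, gibbsProb ι F m ≤ C * exp (Fintype.card ι *
        (energyEntropy F m - sSup (energyEntropy F '' stdSimplex ℝ κ))) := by
  have hcompact := isCompact_stdSimplex ℝ κ
  have hcont : ContinuousOn (energyEntropy F) (stdSimplex ℝ κ) :=
    hF.continuousOn.add continuous_shannonEntropy.continuousOn
  obtain ⟨w, hw, hmax⟩ := hcompact.exists_sSup_image_eq
    ⟨_, single_mem_stdSimplex ℝ (Classical.arbitrary κ)⟩ hcont
  obtain ⟨L, hL⟩ := exists_taylor_two_isBigO_principal (convex_stdSimplex ℝ κ) hcompact hw hF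
  obtain ⟨K, hK, hbound⟩ := hL.exists_nonneg
  have hTaylor : ∀ m ∈ stdSimplex ℝ κ, F w + L (m - w) - K * ‖m - w‖ ^ 2 ≤ F m := by
    intro m hm
    have hm' := Asymptotics.isBigOWith_principal.1 hbound m hm
    rw [norm_pow, norm_norm] at hm'
    linarith [neg_le_of_abs_le hm']
  refine ⟨exp K, exp_pos K, fun ι _ _ _ m hm => ?_⟩
  calc gibbsProb ι F m
      ≤ exp (Fintype.card ι * energyEntropy F m) / partitionFunction ι F :=
        gibbsProb_le_exp_div_partitionFunction hm
    _ ≤ exp (Fintype.card ι * energyEntropy F m) /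
          exp (Fintype.card ι * energyEntropy F w - K) := by
        gcongr
        exact exp_energyEntropy_sub_le_partitionFunction hw hK hTaylor
    _ = exp K * exp (Fintype.card ι *
          (energyEntropy F m - sSup (energyEntropy F '' stdSimplex ℝ κ))) := by
        rw [← exp_sub, ← exp_add, hmax]
        congr 1
        ring

end Gibbs

section ReducedCoordinates

lemma snoc_one_sub_sum_castSucc {d : ℕ} {m : Fin (d + 1) → ℝ} (hm : ∑ k, m k = 1) :
    (Fin.snoc (fun k : Fin d => m k.castSucc) (1 - ∑ k : Fin d, m k.castSucc) : Fin (d + 1) → ℝ)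
      = m := by
  rw [Fin.sum_univ_castSucc] at hm
  rw [← eq_sub_of_add_eq' hm]
  exact Fin.snoc_init_self m

lemma image_snoc_one_sub_sum (d : ℕ) :
    (fun x : Fin d → ℝ => (Fin.snoc x (1 - ∑ k, x k) : Fin (d + 1) → ℝ)) ''
      {x | (∀ k, 0 ≤ x k) ∧ ∑ k, x k ≤ 1} = stdSimplex ℝ (Fin (d + 1)) := by
  ext m
  constructor
  · rintro ⟨x, ⟨hx0, hx1⟩, rfl⟩
    refine ⟨fun k => ?_, by simp [Fin.sum_univ_castSucc]⟩
    cases k using Fin.lastCases with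
    | last => simpa using hx1
    | cast k => simpa using hx0 k
  · rintro ⟨hm0, hm1⟩
    refine ⟨fun k => m k.castSucc, ⟨fun k => hm0 _, ?_⟩, snoc_one_sub_sum_castSucc hm1⟩
    rw [Fin.sum_univ_castSucc] at hm1
    linarith [hm0 (Fin.last d)]

end ReducedCoordinates

theorem stmt_16_general
    (d : ℕ)
    (F : (Fin (d + 1) → ℝ) → ℝ)
    (hF : ContDiffOn ℝ 2 F (stdSimplex ℝ (Fin (d + 1))))
    (ent : (Fin (d + 1) → ℝ) → ℝ)
    (hent : ∀ m, ent m = -∑ k, m k * log (m k))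
    (G : (Fin d → ℝ) → ℝ)
    (hG : ∀ x : Fin d → ℝ,
      G x = F (Fin.snoc x (1 - ∑ k, x k)) + ent (Fin.snoc x (1 - ∑ k, x k)))
    (Δhat : Set (Fin d → ℝ))
    (hΔhat : Δhat = {x : Fin d → ℝ | (∀ k, 0 ≤ x k) ∧ ∑ k, x k ≤ 1})
    (Z : ℕ → ℝ)
    (hZ : ∀ N : ℕ, Z N = ∑ σ : Fin N → Fin (d + 1),
      exp ((N : ℝ) * F (fun k => ((Finset.univ.filter fun i => σ i = k).card : ℝ) / N)))
    (μ : ∀ N : ℕ, (Fin N → Fin (d + 1)) → ℝ)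
    (hμ : ∀ N σ, μ N σ =
      exp ((N : ℝ) * F (fun k => ((Finset.univ.filter fun i => σ i = k).card : ℝ) / N)) / Z N)
    (μtilde : ℕ → (Fin (d + 1) → ℝ) → ℝ)
    (hμtilde : ∀ N m, μtilde N m = ∑ σ : Fin N → Fin (d + 1),
      if (∀ k, ((Finset.univ.filter fun i => σ i = k).card : ℝ) / N = m k) then μ N σ else 0) :
    ∃ C₁ > (0 : ℝ), ∀ N ≥ 1, ∀ m ∈ stdSimplex ℝ (Fin (d + 1)),
      μtilde N m ≤ C₁ * exp ((N : ℝ) *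
        (G (fun k : Fin d => m (Fin.castSucc k)) - sSup (G '' Δhat))) := by
  have hGsnoc (x : Fin d → ℝ) : G x = energyEntropy F (Fin.snoc x (1 - ∑ k, x k)) := by
    simp [hG, hent, energyEntropy, shannonEntropy, negMulLog]
  have himage : G '' Δhat = energyEntropy F '' stdSimplex ℝ (Fin (d + 1)) := by
    rw [← image_snoc_one_sub_sum, Set.image_image, hΔhat]
    exact Set.image_congr fun x _ => hGsnoc x
  have hgibbs (N : ℕ) (m : Fin (d + 1) → ℝ) : μtilde N m = gibbsProb (Fin N) F m := by
    simp only [hμtilde, hμ, hZ, gibbsProb, partitionFunction, funext_iff]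
    unfold magnetization
    simp only [Fintype.card_fin]
  obtain ⟨C, hC, hbound⟩ := exists_gibbsProb_le hF
  refine ⟨C, hC, fun N hN m hm => ?_⟩
  have : NeZero N := ⟨by lia⟩
  rw [hgibbs, himage, hGsnoc, snoc_one_sub_sum_castSucc hm.2]
  simpa using hbound (Fin N) m hm

/-- Under assumptions (A) and (B), there are `C₁ > 0` and `N₀` such that
for all `N ≥ N₀` and all `m ∈ Δ` with `Nm ∈ ℤ^q`, the Gibbs probability of the
magnetization value `m` satisfies
`μ_N(m_N = m) ≤ C₁ exp(N(G(m̂) − sup_{Δ̂} G))`. Here `q = d + 1`, `d ≥ 1`. -/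
theorem stmt_16
    (d p : ℕ) (hd : 1 ≤ d) (hp : 1 ≤ p)
    (F : (Fin (d + 1) → ℝ) → ℝ)
    (hF : ContDiffOn ℝ 2 F {m : Fin (d + 1) → ℝ | (∀ k, 0 ≤ m k) ∧ ∑ k, m k = 1})
    (ent : (Fin (d + 1) → ℝ) → ℝ)
    (hent : ∀ m, ent m = -∑ k, m k * Real.log (m k))
    (G : (Fin d → ℝ) → ℝ)
    (hG : ∀ x : Fin d → ℝ,
      G x = F (Fin.snoc x (1 - ∑ k, x k)) + ent (Fin.snoc x (1 - ∑ k, x k)))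
    (Δhat : Set (Fin d → ℝ))
    (hΔhat : Δhat = {x : Fin d → ℝ | (∀ k, 0 ≤ x k) ∧ ∑ k, x k ≤ 1})
    -- (A): the global maximizers of `G` on `Δ̂` are exactly the `p` distinct points
    -- `M 1, …, M p`, all lying in the interior of `Δ̂`
    (M : Fin p → Fin d → ℝ)
    (hMinj : Function.Injective M)
    (hMint : ∀ j, M j ∈ interior Δhat)
    (hMmax : ∀ j, ∀ x ∈ Δhat, G x ≤ G (M j))
    (hMonly : ∀ x ∈ Δhat, (∀ y ∈ Δhat, G y ≤ G x) → ∃ j, x = M j)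
    -- (B): `H_j = -Hess G (M_j)` is positive definite
    (H : Fin p → Matrix (Fin d) (Fin d) ℝ)
    (hH : ∀ j k l, H j k l =
      -(fderiv ℝ (fun x => fderiv ℝ G x (Pi.single l 1)) (M j)) (Pi.single k 1))
    (hHpd : ∀ j, (H j).PosDef)
    (Z : ℕ → ℝ)
    (hZ : ∀ N : ℕ, Z N = ∑ σ : Fin N → Fin (d + 1),
      Real.exp ((N : ℝ) * F (fun k => ((Finset.univ.filter fun i => σ i = k).card : ℝ) / N)))
    (μ : ∀ N : ℕ, (Fin N → Fin (d + 1)) → ℝ)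
    (hμ : ∀ N σ, μ N σ =
      Real.exp ((N : ℝ) * F (fun k => ((Finset.univ.filter fun i => σ i = k).card : ℝ) / N)) / Z N)
    (μtilde : ∀ N : ℕ, (Fin (d + 1) → ℝ) → ℝ)
    (hμtilde : ∀ N m, μtilde N m = ∑ σ : Fin N → Fin (d + 1),
      if (∀ k, ((Finset.univ.filter fun i => σ i = k).card : ℝ) / N = m k) then μ N σ else 0) :
    ∃ C₁ > (0 : ℝ), ∃ N₀ : ℕ, ∀ N ≥ N₀, ∀ m : Fin (d + 1) → ℝ,
      ((∀ k, 0 ≤ m k) ∧ ∑ k, m k = 1) →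
      (∀ k, ∃ z : ℤ, (N : ℝ) * m k = z) →
      μtilde N m ≤ C₁ * Real.exp ((N : ℝ) *
        (G (fun k : Fin d => m (Fin.castSucc k)) - sSup (G '' Δhat))) := by
  obtain ⟨C₁, hC₁, h⟩ := stmt_16_general d F hF ent hent G hG Δhat hΔhat Z hZ μ hμ μtilde hμtilde
  exact ⟨C₁, hC₁, 1, fun N hN m hm _ => h N hN m hm⟩
end

section
/- Let G(x) = (1/2)(1−2x)² − x log x − (1−x) log(1−x) for x ∈ (0,1) (the Curie–Weiss free energy functional at β = 1, h = 0). Then: (i) G(1/2) = log 2 and G(x) < log 2 for all x ∈ (0,1) with x ≠ 1/2, i.e., x = 1/2 is the unique global maximizer; (ii) G'(1/2) = G''(1/2) = G'''(1/2) = 0; (iii) the fourth derivative satisfies G''''(1/2) = −32. -/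
open Real

/-!
The function `x ↦ (β / 2) (1 - 2x)² + H(x)`, with `H` the binary entropy, is invariant under
`x ↦ 1 - x`, so its derivatives of odd order vanish at `1 / 2`. The even ones, from the second on,
come from `H' = log (1 - x) - log x`, the quadratic term adding only `4 β` to the second.
For `β ≤ 1`, the second derivative `4 β - 1 / (x (1 - x))` is negative except possibly at `1 / 2`,
so the function is strictly concave on `[0, 1]`, and its value at the midpoint of `x` and `1 - x`
exceeds the common value at these two points.
-/

open scoped Nat

theorem iteratedDeriv_half_eq_zero_of_const_sub_eq {𝕜 F : Type*}
    [NontriviallyNormedField 𝕜] [NeZero (2 : 𝕜)] [NormedAddCommGroup F] [NormedSpace 𝕜 F]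
    {f : 𝕜 → F} {c : 𝕜} (hf : ∀ x, f (c - x) = f x) {n : ℕ} (hn : Odd n) :
    iteratedDeriv n f (c / 2) = 0 := by
  have h_reflect := congrFun (iteratedDeriv_comp_const_sub n f c) (c / 2)
  rw [funext hf, hn.neg_one_pow, neg_one_smul, sub_half,
    eq_neg_iff_add_eq_zero, ← two_smul 𝕜] at h_reflect
  exact (smul_eq_zero_iff_right two_ne_zero).mp h_reflect

theorem iteratedDeriv_succ_real_log (n : ℕ) (x : ℝ) :
    iteratedDeriv (n + 1) log x = (-1) ^ n * n ! * x ^ (-1 - n : ℤ) := by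
  rw [iteratedDeriv_succ', deriv_log', iteratedDeriv_eq_iterate]
  exact iter_deriv_inv n x

theorem contDiffAt_binEntropy {n : WithTop ℕ∞} {p : ℝ} (hp₀ : p ≠ 0) (hp₁ : p ≠ 1) :
    ContDiffAt ℝ n binEntropy p := by
  have hp : 1 - p ≠ 0 := sub_ne_zero.mpr hp₁.symm
  unfold binEntropy
  fun_prop (disch := simpa)

theorem iteratedDeriv_add_two_binEntropy (n : ℕ) {p : ℝ} (hp₀ : p ≠ 0) (hp₁ : p ≠ 1) :
    iteratedDeriv (n + 2) binEntropy p =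
      -n ! * ((1 - p) ^ (-1 - n : ℤ) + (-1) ^ n * p ^ (-1 - n : ℤ)) := by
  have hp : 1 - p ≠ 0 := sub_ne_zero.mpr hp₁.symm
  have h_deriv : deriv binEntropy = (fun q ↦ log (1 - q)) - log := funext deriv_binEntropy
  have h_log_one_sub : ContDiffAt ℝ (n + 1 : ℕ) (fun q ↦ log (1 - q)) p := by
    fun_prop (disch := assumption)
  rw [iteratedDeriv_succ', h_deriv, iteratedDeriv_sub h_log_one_sub (contDiffAt_log.mpr hp₀),
    iteratedDeriv_comp_const_sub]
  simp only [iteratedDeriv_succ_real_log, smul_eq_mul]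
  have h_sign : (-1 : ℝ) ^ (n + 1) * (-1) ^ n = -1 := by
    rw [← pow_add]
    exact Odd.neg_one_pow ⟨n, by ring⟩
  linear_combination (n ! * (1 - p) ^ (-1 - n : ℤ) : ℝ) * h_sign

/-- The Curie–Weiss free energy functional at inverse temperature `β` and zero external field,
namely energy plus entropy, as a function of the proportion `x` of one of the two spin values
(so that the magnetization is `±(1 - 2 * x)`). -/
noncomputable def curieWeissFreeEnergy (β x : ℝ) : ℝ :=
  β / 2 * (1 - 2 * x) ^ 2 + binEntropy x

namespace curieWeissFreeEnergy

variable (β : ℝ) {x : ℝ}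

theorem apply_half : curieWeissFreeEnergy β (1 / 2) = log 2 := by
  simp [curieWeissFreeEnergy]

theorem apply_one_sub (x : ℝ) : curieWeissFreeEnergy β (1 - x) = curieWeissFreeEnergy β x := by
  rw [curieWeissFreeEnergy, curieWeissFreeEnergy, binEntropy_one_sub]
  ring

theorem contDiffAt {n : WithTop ℕ∞} (hx₀ : x ≠ 0) (hx₁ : x ≠ 1) :
    ContDiffAt ℝ n (curieWeissFreeEnergy β) x :=
  ContDiffAt.add (by fun_prop) (contDiffAt_binEntropy hx₀ hx₁)

theorem iteratedDeriv_add_two (n : ℕ) (hx₀ : x ≠ 0) (hx₁ : x ≠ 1) :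
    iteratedDeriv (n + 2) (curieWeissFreeEnergy β) x =
      (if n = 0 then 4 * β else 0) + iteratedDeriv (n + 2) binEntropy x := by
  have h_deriv : deriv (fun y ↦ β / 2 * (1 - 2 * y) ^ 2) = fun y ↦ 4 * β * y - 2 * β := by
    ext y
    have h_affine : HasDerivAt (fun z : ℝ ↦ 1 - 2 * z) (-2) y := by
      simpa using ((hasDerivAt_id y).const_mul 2).const_sub 1
    rw [((h_affine.fun_pow 2).const_mul (β / 2)).deriv]
    ring
  have h_deriv_two : deriv (fun y ↦ 4 * β * y - 2 * β) = fun _ ↦ 4 * β := by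
    ext y
    simp
  have h_quadratic : iteratedDeriv (n + 2) (fun y ↦ β / 2 * (1 - 2 * y) ^ 2) x =
      if n = 0 then 4 * β else 0 := by
    rw [iteratedDeriv_succ', iteratedDeriv_succ', h_deriv, h_deriv_two, iteratedDeriv_const]
  rw [← h_quadratic]
  exact iteratedDeriv_add (by fun_prop) (contDiffAt_binEntropy hx₀ hx₁)

theorem iteratedDeriv_two (hx₀ : x ≠ 0) (hx₁ : x ≠ 1) :
    iteratedDeriv 2 (curieWeissFreeEnergy β) x = 4 * β - 1 / (x * (1 - x)) := by
  rw [iteratedDeriv_add_two β 0 hx₀ hx₁, iteratedDeriv_eq_iterate, deriv2_binEntropy]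
  simp only [if_true]
  ring

theorem iteratedDeriv_four_half : iteratedDeriv 4 (curieWeissFreeEnergy β) (1 / 2) = -32 := by
  rw [iteratedDeriv_add_two β 2 (by norm_num) (by norm_num),
    iteratedDeriv_add_two_binEntropy 2 (by norm_num) (by norm_num)]
  norm_num [Nat.factorial]

theorem iteratedDeriv_half_of_odd {n : ℕ} (hn : Odd n) :
    iteratedDeriv n (curieWeissFreeEnergy β) (1 / 2) = 0 :=
  iteratedDeriv_half_eq_zero_of_const_sub_eq (apply_one_sub β) hn

variable {β}

theorem iteratedDeriv_two_neg (hβ : β ≤ 1) (hx : x ∈ Set.Ioo 0 1) (hx_half : x ≠ 1 / 2) :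
    iteratedDeriv 2 (curieWeissFreeEnergy β) x < 0 := by
  have h_pos : 0 < x * (1 - x) := mul_pos hx.1 (sub_pos.mpr hx.2)
  have h_sq : 0 < (x - 1 / 2) ^ 2 := sq_pos_of_ne_zero (sub_ne_zero.mpr hx_half)
  have h_four : 4 < 1 / (x * (1 - x)) := by
    rw [lt_div_iff₀ h_pos]
    linarith
  rw [iteratedDeriv_two β hx.1.ne' hx.2.ne]
  linarith

theorem strictAntiOn_deriv (hβ : β ≤ 1) :
    StrictAntiOn (deriv (curieWeissFreeEnergy β)) (Set.Ioo 0 1) := by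
  have h_cont : ContinuousOn (deriv (curieWeissFreeEnergy β)) (Set.Ioo 0 1) := fun x hx ↦
    ((contDiffAt (n := 2) β hx.1.ne' hx.2.ne).derivWithin
      (m := 1) (by norm_num)).continuousAt.continuousWithinAt
  have h_neg : ∀ x ∈ Set.Ioo (0 : ℝ) 1, x ≠ 1 / 2 →
      deriv (deriv (curieWeissFreeEnergy β)) x < 0 := fun x hx hx_half ↦ by
    simpa only [iteratedDeriv_succ, iteratedDeriv_zero] using iteratedDeriv_two_neg hβ hx hx_half
  have h_left : StrictAntiOn (deriv (curieWeissFreeEnergy β)) (Set.Ioc 0 (1 / 2)) := by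
    refine strictAntiOn_of_deriv_neg (convex_Ioc _ _)
      (h_cont.mono (Set.Ioc_subset_Ioo_right one_half_lt_one)) fun x hx ↦ ?_
    rw [interior_Ioc] at hx
    exact h_neg x ⟨hx.1, hx.2.trans one_half_lt_one⟩ hx.2.ne
  have h_right : StrictAntiOn (deriv (curieWeissFreeEnergy β)) (Set.Ico (1 / 2) 1) := by
    refine strictAntiOn_of_deriv_neg (convex_Ico _ _)
      (h_cont.mono (Set.Ico_subset_Ioo_left one_half_pos)) fun x hx ↦ ?_
    rw [interior_Ico] at hx
    exact h_neg x ⟨one_half_pos.trans hx.1, hx.2⟩ hx.1.ne'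
  rw [← Set.Ioc_union_Ico_eq_Ioo (one_half_pos (α := ℝ)) one_half_lt_one]
  exact h_left.union h_right (isGreatest_Ioc one_half_pos) (isLeast_Ico one_half_lt_one)

theorem strictConcaveOn (hβ : β ≤ 1) :
    StrictConcaveOn ℝ (Set.Icc 0 1) (curieWeissFreeEnergy β) := by
  have h_cont : Continuous (curieWeissFreeEnergy β) := by
    unfold curieWeissFreeEnergy
    fun_prop
  refine StrictAntiOn.strictConcaveOn_of_deriv (convex_Icc 0 1) h_cont.continuousOn ?_
  rw [interior_Icc]
  exact strictAntiOn_deriv hβ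

theorem lt_log_two (hβ : β ≤ 1) (hx : x ∈ Set.Icc 0 1) (hx_half : x ≠ 1 / 2) :
    curieWeissFreeEnergy β x < log 2 := by
  have hx_reflect : 1 - x ∈ Set.Icc 0 1 := ⟨sub_nonneg.mpr hx.2, sub_le_self 1 hx.1⟩
  have hx_ne : x ≠ 1 - x := fun h ↦ hx_half (by linarith)
  have h_half_mem : 1 / 2 ∈ openSegment ℝ x (1 - x) :=
    ⟨1 / 2, 1 / 2, one_half_pos, one_half_pos, add_halves 1, by simp only [smul_eq_mul]; ring⟩
  have h_lt := (strictConcaveOn hβ).lt_on_openSegment hx hx_reflect hx_ne h_half_mem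
  rwa [apply_one_sub, min_self, apply_half] at h_lt

end curieWeissFreeEnergy

open curieWeissFreeEnergy in
theorem stmt_17_general {β : ℝ} (hβ : β ≤ 1) :
    (curieWeissFreeEnergy β (1 / 2) = log 2 ∧
      ∀ x ∈ Set.Icc (0 : ℝ) 1, x ≠ 1 / 2 → curieWeissFreeEnergy β x < log 2) ∧
    (deriv (curieWeissFreeEnergy β) (1 / 2) = 0 ∧
      iteratedDeriv 2 (curieWeissFreeEnergy β) (1 / 2) = 4 * (β - 1) ∧
      iteratedDeriv 3 (curieWeissFreeEnergy β) (1 / 2) = 0) ∧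
    iteratedDeriv 4 (curieWeissFreeEnergy β) (1 / 2) = -32 := by
  refine ⟨⟨apply_half β, fun x hx hx_half ↦ lt_log_two hβ hx hx_half⟩, ⟨?_, ?_, ?_⟩,
    iteratedDeriv_four_half β⟩
  · rw [← iteratedDeriv_one]
    exact iteratedDeriv_half_of_odd β odd_one
  · rw [iteratedDeriv_two β (by norm_num) (by norm_num)]
    ring
  · exact iteratedDeriv_half_of_odd β (by decide)

/-- For the critical Curie–Weiss free energy
`G(x) = ½(1−2x)² − x log x − (1−x) log(1−x)` on `(0,1)`:
(i) `G(1/2) = log 2` and `x = 1/2` is the unique global maximizer on `(0,1)`;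
(ii) `G'(1/2) = G''(1/2) = G'''(1/2) = 0`; (iii) `G''''(1/2) = −32`.
(We extend `G` by the same formula to all of `ℝ`, where `Real.log` is the usual junk
extension; all derivatives at `1/2` are genuine.) -/
theorem stmt_17
    (G : ℝ → ℝ)
    (hG : ∀ x : ℝ, G x =
      (1 / 2) * (1 - 2 * x) ^ 2 - x * Real.log x - (1 - x) * Real.log (1 - x)) :
    (G (1 / 2) = Real.log 2 ∧
      ∀ x ∈ Set.Ioo (0 : ℝ) 1, x ≠ 1 / 2 → G x < Real.log 2) ∧
    (deriv G (1 / 2) = 0 ∧ iteratedDeriv 2 G (1 / 2) = 0 ∧ iteratedDeriv 3 G (1 / 2) = 0) ∧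
    iteratedDeriv 4 G (1 / 2) = -32 := by
  obtain rfl : G = curieWeissFreeEnergy 1 := funext fun x ↦ by
    simp only [hG, curieWeissFreeEnergy, binEntropy, log_inv]
    ring
  obtain ⟨⟨h_half, h_max⟩, ⟨h_one, h_two, h_three⟩, h_four⟩ := stmt_17_general le_rfl
  exact ⟨⟨h_half, fun x hx ↦ h_max x (Set.Ioo_subset_Icc_self hx)⟩,
    ⟨h_one, by simpa using h_two, h_three⟩, h_four⟩
end
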